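/- For any teleportation assemblage {σ_{a|ω_x}} arising from a shared state ρ^{AB}, a POVM {M_a^{VA}} and input states {ω_x}, the generalized teleportation robustness is bounded by the generalized entanglement robustness of the shared state: τ_gen({σ_{a|ω_x}}) ≤ ε_gen(ρ^{AB}). -/

import Mathlib

open Matrix ComplexOrder
open scoped Kronecker

namespace Tele

noncomputable def ptrace₁ {V B : Type*} [Fintype V]
    (M : Matrix (V × B) (V × B) ℂ) : Matrix B B ℂ :=
  Matrix.of fun b b' => ∑ v, M (v, b) (v, b')

noncomputable def ptrace₂ {V B : Type*} [Fintype B]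
    (M : Matrix (V × B) (V × B) ℂ) : Matrix V V ℂ :=
  Matrix.of fun v v' => ∑ b, M (v, b) (v', b)

noncomputable def ptraceMid {V A B : Type*} [Fintype A]
    (M : Matrix (V × A × B) (V × A × B) ℂ) : Matrix (V × B) (V × B) ℂ :=
  Matrix.of fun p q => ∑ a, M (p.1, a, p.2) (q.1, a, q.2)

noncomputable def ptraceVA {V A B : Type*} [Fintype V] [Fintype A]
    (M : Matrix (V × A × B) (V × A × B) ℂ) : Matrix B B ℂ :=
  Matrix.of fun b b' => ∑ v, ∑ a, M (v, a, b) (v, a, b')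

noncomputable def ptraceV₁A {V V₁ A B : Type*} [Fintype V₁] [Fintype A]
    (M : Matrix (V × V₁ × A × B) (V × V₁ × A × B) ℂ) : Matrix (V × B) (V × B) ℂ :=
  Matrix.of fun p q => ∑ v₁, ∑ a, M (p.1, v₁, a, p.2) (q.1, v₁, a, q.2)

def ptranspose₁ {V B : Type*} (M : Matrix (V × B) (V × B) ℂ) : Matrix (V × B) (V × B) ℂ :=
  Matrix.of fun p q => M (q.1, p.2) (p.1, q.2)

def ptranspose₂ {V B : Type*} (M : Matrix (V × B) (V × B) ℂ) : Matrix (V × B) (V × B) ℂ :=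
  Matrix.of fun p q => M (p.1, q.2) (q.1, p.2)

def Separable {V B : Type*} [Fintype V] [Fintype B]
    (M : Matrix (V × B) (V × B) ℂ) : Prop :=
  ∃ (n : ℕ) (τ : Fin n → Matrix V V ℂ) (χ : Fin n → Matrix B B ℂ),
    (∀ i, (τ i).PosSemidef) ∧ (∀ i, (χ i).PosSemidef) ∧ M = ∑ i, τ i ⊗ₖ χ i

def IsState {V : Type*} [Fintype V] (ρ : Matrix V V ℂ) : Prop :=
  ρ.PosSemidef ∧ ρ.trace = 1

noncomputable def maxEnt (d : ℕ) : Matrix (Fin d × Fin d) (Fin d × Fin d) ℂ :=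
  Matrix.of fun p q => if p.1 = p.2 ∧ q.1 = q.2 then (d : ℂ)⁻¹ else 0

noncomputable def chanOp {V A B : Type*} [Fintype V] [Fintype A] [Fintype B]
    [DecidableEq V] [DecidableEq B]
    (M : Matrix (V × A) (V × A) ℂ) (ρ : Matrix (A × B) (A × B) ℂ) :
    Matrix (V × B) (V × B) ℂ :=
  ptraceMid ((Matrix.reindex (Equiv.prodAssoc V A B) (Equiv.prodAssoc V A B)
      (M ⊗ₖ (1 : Matrix B B ℂ))) * ((1 : Matrix V V ℂ) ⊗ₖ ρ))

noncomputable def teleA {V A B : Type*} [Fintype V] [Fintype A] [Fintype B] [DecidableEq B]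
    (M : Matrix (V × A) (V × A) ℂ) (ρ : Matrix (A × B) (A × B) ℂ) (ω : Matrix V V ℂ) :
    Matrix B B ℂ :=
  ptraceVA ((Matrix.reindex (Equiv.prodAssoc V A B) (Equiv.prodAssoc V A B)
      (M ⊗ₖ (1 : Matrix B B ℂ))) * (ω ⊗ₖ ρ))

noncomputable def margOp {V A : Type*} [Fintype V] [Fintype A] [DecidableEq V]
    (M : Matrix (V × A) (V × A) ℂ) (ρA : Matrix A A ℂ) : Matrix V V ℂ :=
  ptrace₂ (M * ((1 : Matrix V V ℂ) ⊗ₖ ρA))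

noncomputable def piOp {A B : Type*} [Fintype A] [Fintype B] [DecidableEq B]
    (χ : Matrix A A ℂ) (ρ : Matrix (A × B) (A × B) ℂ) : Matrix B B ℂ :=
  ptrace₁ ((χ ⊗ₖ (1 : Matrix B B ℂ)) * ρ)

def TomoComplete {V X : Type*} [Fintype V] (ω : X → Matrix V V ℂ) : Prop :=
  ∀ H : Matrix V V ℂ, H.IsHermitian → H ∈ Submodule.span ℝ (Set.range ω)

noncomputable def shiftX (d : ℕ) : Matrix (Fin d) (Fin d) ℂ :=
  Matrix.of fun i j => if (i : ℕ) = ((j : ℕ) + 1) % d then 1 else 0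

noncomputable def clockZ (d : ℕ) : Matrix (Fin d) (Fin d) ℂ :=
  Matrix.of fun i j =>
    if i = j then Complex.exp (2 * (Real.pi : ℂ) * Complex.I * ((i : ℕ) : ℂ) / (d : ℂ)) else 0

noncomputable def HW (d : ℕ) (a : Fin d × Fin d) : Matrix (Fin d) (Fin d) ℂ :=
  shiftX d ^ (a.1 : ℕ) * clockZ d ^ (a.2 : ℕ)

noncomputable def bellPOVM (d : ℕ) (a : Fin d × Fin d) :
    Matrix (Fin d × Fin d) (Fin d × Fin d) ℂ :=
  (HW d a ⊗ₖ (1 : Matrix (Fin d) (Fin d) ℂ)) * maxEnt d *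
    ((HW d a)ᴴ ⊗ₖ (1 : Matrix (Fin d) (Fin d) ℂ))

noncomputable def negativity {A B : Type*} [Fintype A] [Fintype B]
    (ρ : Matrix (A × B) (A × B) ℂ) : ℝ :=
  sInf {t : ℝ | ∃ ρp ρm : Matrix (A × B) (A × B) ℂ,
    ρ = ρp - ρm ∧ (ptranspose₁ ρp).PosSemidef ∧ (ptranspose₁ ρm).PosSemidef ∧
    t = (ρm.trace).re}

noncomputable def epsGen {A B : Type*} [Fintype A] [Fintype B]
    (ρ : Matrix (A × B) (A × B) ℂ) : ℝ :=
  sInf {r : ℝ | 0 ≤ r ∧ ∃ ρs : Matrix (A × B) (A × B) ℂ, IsState ρs ∧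
    Separable ((((1 + r : ℝ) : ℂ))⁻¹ • (ρ + ((r : ℝ) : ℂ) • ρs))}

noncomputable def epsSep {A B : Type*} [Fintype A] [Fintype B]
    (ρ : Matrix (A × B) (A × B) ℂ) : ℝ :=
  sInf {r : ℝ | 0 ≤ r ∧ ∃ ρs : Matrix (A × B) (A × B) ℂ, IsState ρs ∧ Separable ρs ∧
    Separable ((((1 + r : ℝ) : ℂ))⁻¹ • (ρ + ((r : ℝ) : ℂ) • ρs))}

noncomputable def epsR {A B : Type*} [Fintype A] [Fintype B] [DecidableEq A] [DecidableEq B]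
    (ρ : Matrix (A × B) (A × B) ℂ) : ℝ :=
  sInf {r : ℝ | 0 ≤ r ∧
    Separable ((((1 + r : ℝ) : ℂ))⁻¹ •
      (ρ + ((r : ℝ) : ℂ) • ((Fintype.card (A × B) : ℂ)⁻¹ • (1 : Matrix (A × B) (A × B) ℂ))))}

noncomputable def epsBSA {A B : Type*} [Fintype A] [Fintype B]
    (ρ : Matrix (A × B) (A × B) ℂ) : ℝ :=
  sInf {p : ℝ | 0 ≤ p ∧ p ≤ 1 ∧ ∃ ρs σS : Matrix (A × B) (A × B) ℂ,
    IsState ρs ∧ IsState σS ∧ Separable σS ∧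
    ρ = ((p : ℝ) : ℂ) • ρs + (((1 - p : ℝ)) : ℂ) • σS}

noncomputable def tauGen {V B X ι : Type*} [Fintype V] [Fintype B] [Fintype ι]
    [DecidableEq V] [DecidableEq B]
    (ω : X → Matrix V V ℂ) (σ : ι → X → Matrix B B ℂ) : ℝ :=
  sInf {r : ℝ | 0 ≤ r ∧ ∃ (m : ℕ) (ρs : Matrix (Fin m × B) (Fin m × B) ℂ)
      (N : ι → Matrix (V × Fin m) (V × Fin m) ℂ) (Ms : ι → Matrix (V × B) (V × B) ℂ),
      IsState ρs ∧ (∀ a, (N a).PosSemidef) ∧ ((∑ a, N a) = 1) ∧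
      (∀ a, (Ms a).PosSemidef ∧ Separable (Ms a)) ∧
      (∀ a x, (((1 + r : ℝ) : ℂ))⁻¹ • (σ a x + ((r : ℝ) : ℂ) • teleA (N a) ρs (ω x)) =
        ptrace₁ (Ms a * (ω x ⊗ₖ (1 : Matrix B B ℂ)))) ∧
      (∀ x, (∑ a, Ms a) = (1 : Matrix V V ℂ) ⊗ₖ
        ((((1 + r : ℝ) : ℂ))⁻¹ •
          ((∑ a, σ a x) + ((r : ℝ) : ℂ) • ∑ a, teleA (N a) ρs (ω x))))}

noncomputable def tauCl {V B X ι : Type*} [Fintype V] [Fintype B] [Fintype ι]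
    [DecidableEq V] [DecidableEq B]
    (ω : X → Matrix V V ℂ) (σ : ι → X → Matrix B B ℂ) : ℝ :=
  sInf {r : ℝ | 0 ≤ r ∧ ∃ (Mb Ms : ι → Matrix (V × B) (V × B) ℂ),
    (∀ a, (Mb a).PosSemidef ∧ Separable (Mb a)) ∧
    (∀ a, (Ms a).PosSemidef ∧ Separable (Ms a)) ∧
    (∀ x, (∑ a, Mb a) = (1 : Matrix V V ℂ) ⊗ₖ
      (∑ a, ptrace₁ (Mb a * (ω x ⊗ₖ (1 : Matrix B B ℂ))))) ∧
    (∀ a x, (((1 + r : ℝ) : ℂ))⁻¹ •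
        (σ a x + ((r : ℝ) : ℂ) • ptrace₁ (Mb a * (ω x ⊗ₖ (1 : Matrix B B ℂ)))) =
      ptrace₁ (Ms a * (ω x ⊗ₖ (1 : Matrix B B ℂ)))) ∧
    (∀ x, (∑ a, Ms a) = (1 : Matrix V V ℂ) ⊗ₖ
      ((((1 + r : ℝ) : ℂ))⁻¹ •
        ((∑ a, σ a x) + ((r : ℝ) : ℂ) •
          ∑ a, ptrace₁ (Mb a * (ω x ⊗ₖ (1 : Matrix B B ℂ))))))}

noncomputable def tauR {V B X ι : Type*} [Fintype V] [Fintype B] [Fintype ι]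
    [DecidableEq V] [DecidableEq B]
    (ω : X → Matrix V V ℂ) (σ : ι → X → Matrix B B ℂ) : ℝ :=
  sInf {r : ℝ | 0 ≤ r ∧ ∃ (p : ι → ℝ) (Ms : ι → Matrix (V × B) (V × B) ℂ),
    (∀ a, 0 ≤ p a) ∧ ((∑ a, p a) = 1) ∧
    (∀ a, (Ms a).PosSemidef ∧ Separable (Ms a)) ∧
    (∀ a x, (((1 + r : ℝ) : ℂ))⁻¹ •
        (σ a x + ((r * p a : ℝ) : ℂ) • ((Fintype.card B : ℂ)⁻¹ • (1 : Matrix B B ℂ))) =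
      ptrace₁ (Ms a * (ω x ⊗ₖ (1 : Matrix B B ℂ)))) ∧
    (∀ x, (∑ a, Ms a) = (1 : Matrix V V ℂ) ⊗ₖ
      ((((1 + r : ℝ) : ℂ))⁻¹ •
        ((∑ a, σ a x) + ((r : ℝ) : ℂ) • ((Fintype.card B : ℂ)⁻¹ • (1 : Matrix B B ℂ)))))}

noncomputable def TW {V B X ι : Type*} [Fintype V] [Fintype B] [Fintype ι]
    [DecidableEq B]
    (ω : X → Matrix V V ℂ) (σ : ι → X → Matrix B B ℂ) : ℝ :=
  sInf {p : ℝ | 0 ≤ p ∧ p ≤ 1 ∧ ∃ (Mt Mb : ι → Matrix (V × B) (V × B) ℂ),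
    (∀ a, (Mb a).PosSemidef ∧ Separable (Mb a)) ∧
    (∀ a, (ptranspose₁ (Mt a)).PosSemidef) ∧
    (∀ x x', (∑ a, ptrace₁ (Mt a * (ω x ⊗ₖ (1 : Matrix B B ℂ)))) =
      ∑ a, ptrace₁ (Mt a * (ω x' ⊗ₖ (1 : Matrix B B ℂ)))) ∧
    (∀ a x, σ a x = ptrace₁
      ((((p : ℝ) : ℂ) • Mt a + (((1 - p : ℝ)) : ℂ) • Mb a) * (ω x ⊗ₖ (1 : Matrix B B ℂ))))}

theorem teleA_apply {V A B : Type*} [Fintype V] [Fintype A] [Fintype B] [DecidableEq B]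
    (M : Matrix (V × A) (V × A) ℂ) (ρ : Matrix (A × B) (A × B) ℂ) (ω : Matrix V V ℂ) (b b' : B) :
    teleA M ρ ω b b' =
      ∑ v, ∑ a, ∑ v', ∑ a', M (v, a) (v', a') * (ω v' v * ρ (a', b) (a, b')) := by
  simp only [teleA, ptraceVA, Matrix.of_apply, Matrix.mul_apply, Fintype.sum_prod_type]
  refine Finset.sum_congr rfl fun v _ => Finset.sum_congr rfl fun a _ =>
    Finset.sum_congr rfl fun v' _ => Finset.sum_congr rfl fun a' _ => ?_
  rw [Finset.sum_eq_single b]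
  · simp
  · intro c _ hc
    simp [Matrix.one_apply, hc.symm]
  · simp

/-- The effective operator on `V ⊗ B`. -/
noncomputable def eff {V A B : Type*} [Fintype A]
    (M : Matrix (V × A) (V × A) ℂ) (ρ : Matrix (A × B) (A × B) ℂ) : Matrix (V × B) (V × B) ℂ :=
  Matrix.of fun p q => ∑ a, ∑ a', M (p.1, a) (q.1, a') * ρ (a', p.2) (a, q.2)

/-- The effective operator on `V`. -/
noncomputable def marg {V A : Type*} [Fintype A]
    (M : Matrix (V × A) (V × A) ℂ) (τ : Matrix A A ℂ) : Matrix V V ℂ :=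
  Matrix.of fun v v' => ∑ a, ∑ a', M (v, a) (v', a') * τ a' a

theorem ptrace_eff {V A B : Type*} [Fintype V] [Fintype A] [Fintype B] [DecidableEq B]
    (M : Matrix (V × A) (V × A) ℂ) (ρ : Matrix (A × B) (A × B) ℂ) (ω : Matrix V V ℂ) :
    ptrace₁ (eff M ρ * (ω ⊗ₖ (1 : Matrix B B ℂ))) = teleA M ρ ω := by
  ext b b'
  rw [teleA_apply]
  simp only [ptrace₁, Matrix.of_apply, Matrix.mul_apply, Fintype.sum_prod_type]
  refine Finset.sum_congr rfl fun v _ => ?_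
  rw [Finset.sum_comm (s := (Finset.univ : Finset A))]
  refine Finset.sum_congr rfl fun v' _ => ?_
  rw [Finset.sum_eq_single b']
  · simp only [eff, Matrix.of_apply, kroneckerMap_apply, Matrix.one_apply_eq, mul_one,
      Finset.sum_mul]
    refine Finset.sum_congr rfl fun a _ => Finset.sum_congr rfl fun a' _ => ?_
    ring
  · intro c _ hc
    simp [Matrix.one_apply, hc]
  · simp

open scoped MatrixOrder Matrix.Norms.L2Operator in
theorem marg_posSemidef {V A : Type*} [Fintype V] [Fintype A] [DecidableEq V] [DecidableEq A]
    {M : Matrix (V × A) (V × A) ℂ} {τ : Matrix A A ℂ} (hM : M.PosSemidef) (hτ : τ.PosSemidef) :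
    (marg M τ).PosSemidef := by
  obtain ⟨Y, hY⟩ : ∃ Y : Matrix A A ℂ, τ = Yᴴ * Y :=
    CStarAlgebra.nonneg_iff_eq_star_mul_self.1 hτ.nonneg
  have key : marg M τ = ∑ k : A,
      (Matrix.of fun (p : V × A) (v : V) => if p.1 = v then star (Y k p.2) else 0)ᴴ * M *
      (Matrix.of fun (p : V × A) (v : V) => if p.1 = v then star (Y k p.2) else 0) := by
    ext v v'
    rw [Matrix.sum_apply]
    trans ∑ k : A, ∑ a : A, ∑ a' : A, Y k a * M (v, a) (v', a') * star (Y k a')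
    · simp only [marg, Matrix.of_apply, hY, Matrix.mul_apply, Finset.mul_sum,
        Matrix.conjTranspose_apply]
      rw [Finset.sum_comm (f := fun k a => ∑ a' : A, Y k a * M (v, a) (v', a') * star (Y k a'))]
      refine Finset.sum_congr rfl fun a _ => ?_
      rw [Finset.sum_comm]
      refine Finset.sum_congr rfl fun k _ => Finset.sum_congr rfl fun a' _ => ?_
      ring
    · refine Finset.sum_congr rfl fun k _ => ?_
      simp only [Matrix.of_apply, Matrix.mul_apply, Fintype.sum_prod_type,
        Matrix.conjTranspose_apply, apply_ite star, star_star, star_zero, ite_mul, zero_mul,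
        mul_ite, mul_zero]
      rw [Finset.sum_comm]
      rw [Finset.sum_eq_single v']
      · simp only [if_true, Finset.sum_mul]
        refine Finset.sum_congr rfl fun a' _ => ?_
        rw [Finset.sum_eq_single v]
        · simp
        · intro c _ hc
          simp [hc]
        · simp
      · intro c _ hc
        simp [hc]
      · simp
  rw [key]
  exact Matrix.posSemidef_sum _ fun k _ => hM.conjTranspose_mul_mul_same _

theorem eff_sum_kron {V A B : Type*} [Fintype A] {n : ℕ}
    (M : Matrix (V × A) (V × A) ℂ) (τ : Fin n → Matrix A A ℂ) (χ : Fin n → Matrix B B ℂ) :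
    eff M (∑ i, τ i ⊗ₖ χ i) = ∑ i, marg M (τ i) ⊗ₖ χ i := by
  ext p q
  simp only [eff, marg, Matrix.sum_apply, Matrix.of_apply, kroneckerMap_apply, Finset.mul_sum,
    Finset.sum_mul]
  rw [Finset.sum_comm (s := (Finset.univ : Finset (Fin n)))]
  refine Finset.sum_congr rfl fun a _ => ?_
  rw [Finset.sum_comm (s := (Finset.univ : Finset (Fin n)))]
  refine Finset.sum_congr rfl fun a' _ => Finset.sum_congr rfl fun i _ => ?_
  ring

theorem eff_separable {V A B : Type*} [Fintype V] [Fintype A] [Fintype B]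
    [DecidableEq V] [DecidableEq A] [DecidableEq B]
    {M : Matrix (V × A) (V × A) ℂ} {ρ : Matrix (A × B) (A × B) ℂ} (hM : M.PosSemidef)
    (hρ : Separable ρ) : (eff M ρ).PosSemidef ∧ Separable (eff M ρ) := by
  obtain ⟨n, τ, χ, hτ, hχ, rfl⟩ := hρ
  rw [eff_sum_kron]
  exact ⟨Matrix.posSemidef_sum _ fun i _ => (marg_posSemidef hM (hτ i)).kronecker (hχ i),
    n, fun i => marg M (τ i), χ, fun i => marg_posSemidef hM (hτ i), hχ, rfl⟩

theorem sum_eff {V A B ι : Type*} [Fintype V] [Fintype A] [Fintype ι] [DecidableEq V]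
    [DecidableEq A] (M : ι → Matrix (V × A) (V × A) ℂ) (hM : ∑ i, M i = 1)
    (ρ : Matrix (A × B) (A × B) ℂ) :
    ∑ i, eff (M i) ρ = (1 : Matrix V V ℂ) ⊗ₖ ptrace₁ ρ := by
  have h : ∑ i, eff (M i) ρ = eff (∑ i, M i) ρ := by
    ext p q
    simp only [eff, Matrix.sum_apply, Matrix.of_apply, Finset.sum_mul]
    rw [Finset.sum_comm]
    refine Finset.sum_congr rfl fun a _ => ?_
    rw [Finset.sum_comm]
  rw [h, hM]
  ext ⟨v, b⟩ ⟨v', b'⟩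
  by_cases hv : v = v' <;> simp [eff, ptrace₁, Matrix.one_apply, hv]

theorem sum_teleA {V A B ι : Type*} [Fintype V] [Fintype A] [Fintype B] [Fintype ι]
    [DecidableEq V] [DecidableEq A] [DecidableEq B]
    (M : ι → Matrix (V × A) (V × A) ℂ) (hM : ∑ i, M i = 1)
    (ρ : Matrix (A × B) (A × B) ℂ) (ω : Matrix V V ℂ) (hω : ω.trace = 1) :
    ∑ i, teleA (M i) ρ ω = ptrace₁ ρ := by
  have h : ∑ i, teleA (M i) ρ ω = ptrace₁ ((∑ i, eff (M i) ρ) * (ω ⊗ₖ (1 : Matrix B B ℂ))) := by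
    simp only [← ptrace_eff]
    ext b b'
    simp only [ptrace₁, Matrix.sum_apply, Matrix.of_apply, Matrix.sum_mul]
    rw [Finset.sum_comm]
  rw [h, sum_eff M hM, ← Matrix.mul_kronecker_mul, one_mul, mul_one]
  ext b b'
  simp only [ptrace₁, Matrix.of_apply, kroneckerMap_apply, ← Finset.sum_mul]
  have : ∑ v, ω v v = 1 := hω
  rw [this, one_mul]

theorem teleA_lin {V A B : Type*} [Fintype V] [Fintype A] [Fintype B] [DecidableEq B]
    (M : Matrix (V × A) (V × A) ℂ) (ρ ρ' : Matrix (A × B) (A × B) ℂ) (ω : Matrix V V ℂ)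
    (c r : ℂ) :
    c • (teleA M ρ ω + r • teleA M ρ' ω) = teleA M (c • (ρ + r • ρ')) ω := by
  ext b b'
  simp only [teleA_apply, Matrix.smul_apply, Matrix.add_apply, smul_eq_mul, Finset.mul_sum,
    ← Finset.sum_add_distrib]
  refine Finset.sum_congr rfl fun v _ => Finset.sum_congr rfl fun a _ =>
    Finset.sum_congr rfl fun v' _ => Finset.sum_congr rfl fun a' _ => ?_
  ring

theorem ptrace_lin {A B : Type*} [Fintype A]
    (ρ ρ' : Matrix (A × B) (A × B) ℂ) (c r : ℂ) :
    c • (ptrace₁ ρ + r • ptrace₁ ρ') = ptrace₁ (c • (ρ + r • ρ')) := by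
  ext b b'
  simp only [ptrace₁, Matrix.of_apply, Matrix.smul_apply, Matrix.add_apply, smul_eq_mul,
    Finset.mul_sum, ← Finset.sum_add_distrib]

theorem teleA_reindex {V A A' B : Type*} [Fintype V] [Fintype A] [Fintype A'] [Fintype B]
    [DecidableEq B] (e : A' ≃ A)
    (M : Matrix (V × A) (V × A) ℂ) (ρ : Matrix (A × B) (A × B) ℂ) (ω : Matrix V V ℂ) :
    teleA (M.submatrix (Prod.map id e) (Prod.map id e))
      (ρ.submatrix (Prod.map e id) (Prod.map e id)) ω = teleA M ρ ω := by
  ext b b'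
  simp only [teleA_apply, Matrix.submatrix_apply, Prod.map_apply, id]
  refine Finset.sum_congr rfl fun v _ => ?_
  refine Fintype.sum_equiv e _ _ fun a => ?_
  refine Finset.sum_congr rfl fun v' _ => ?_
  exact Fintype.sum_equiv e _ _ fun a => rfl

theorem posSemidef_one_sub {n : Type*} [Fintype n] [DecidableEq n] {ρ : Matrix n n ℂ}
    (hρ : IsState ρ) : ((2 : ℂ) • (1 : Matrix n n ℂ) - ρ).PosSemidef := by
  have hH := hρ.1.isHermitian
  have hsum : ∑ i, hH.eigenvalues i = 1 := by
    have h := hH.trace_eq_sum_eigenvalues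
    rw [hρ.2] at h
    have h' := congrArg Complex.re h.symm
    simpa using h'
  have hle : ∀ i, hH.eigenvalues i ≤ 1 := fun i => by
    rw [← hsum]
    exact Finset.single_le_sum (f := hH.eigenvalues)
      (fun j _ => hρ.1.eigenvalues_nonneg j) (Finset.mem_univ i)
  have h1 : (2 : ℂ) • (1 : Matrix n n ℂ) - ρ =
      (hH.eigenvectorUnitary : Matrix n n ℂ) *
        ((2 : ℂ) • (1 : Matrix n n ℂ) - diagonal (RCLike.ofReal ∘ hH.eigenvalues)) *
        (hH.eigenvectorUnitary : Matrix n n ℂ)ᴴ := by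
    have hU : (hH.eigenvectorUnitary : Matrix n n ℂ) *
        (hH.eigenvectorUnitary : Matrix n n ℂ)ᴴ = 1 :=
      Unitary.mul_star_self_of_mem hH.eigenvectorUnitary.2
    have hs := hH.spectral_theorem
    rw [Unitary.conjStarAlgAut_apply] at hs
    rw [mul_sub, sub_mul, Matrix.mul_smul, Matrix.smul_mul, mul_one, hU]
    congr 1
  rw [h1]
  refine Matrix.PosSemidef.mul_mul_conjTranspose_same ?_ _
  rw [Matrix.smul_one_eq_diagonal, Matrix.diagonal_sub]
  refine Matrix.PosSemidef.diagonal fun i => ?_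
  have h2 : (0 : ℝ) ≤ 2 - hH.eigenvalues i := by linarith [hle i]
  have h3 : (0 : ℂ) ≤ ((2 - hH.eigenvalues i : ℝ) : ℂ) := Complex.zero_le_real.2 h2
  simpa using h3

theorem eps_nonempty {A B : Type*} [Fintype A] [Fintype B] [DecidableEq A] [DecidableEq B]
    (ρ : Matrix (A × B) (A × B) ℂ) (hρ : IsState ρ) :
    {r : ℝ | 0 ≤ r ∧ ∃ ρs : Matrix (A × B) (A × B) ℂ, IsState ρs ∧
    Separable ((((1 + r : ℝ) : ℂ))⁻¹ • (ρ + ((r : ℝ) : ℂ) • ρs))}.Nonempty := by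
  have hne : Nonempty (A × B) := by
    by_contra h
    rw [not_nonempty_iff] at h
    have := hρ.2
    simp [Matrix.trace] at this
  have hc : 1 ≤ Fintype.card (A × B) := Fintype.card_pos
  set N := Fintype.card (A × B) with hN
  have hN' : (1 : ℝ) ≤ N := by exact_mod_cast hc
  have hr : (0 : ℝ) < 2 * N - 1 := by linarith
  have hrc : (((2 * N - 1 : ℝ)) : ℂ) ≠ 0 := by exact_mod_cast hr.ne'
  refine ⟨2 * N - 1, hr.le, (((2 * N - 1 : ℝ) : ℂ))⁻¹ • ((2 : ℂ) • 1 - ρ), ⟨?_, ?_⟩, ?_⟩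
  · refine (posSemidef_one_sub hρ).smul ?_
    rw [← Complex.ofReal_inv]
    exact_mod_cast (inv_pos.2 hr).le
  · rw [Matrix.trace_smul, Matrix.trace_sub, Matrix.trace_smul, Matrix.trace_one, hρ.2, ← hN,
      smul_eq_mul, smul_eq_mul]
    have : (2 * (N : ℂ) - 1) = (((2 * N - 1 : ℝ)) : ℂ) := by push_cast; ring
    rw [this, inv_mul_cancel₀ hrc]
  · rw [smul_smul, mul_inv_cancel₀ hrc, one_smul, add_sub_cancel]
    refine ⟨1, fun _ => (((1 + (2 * N - 1) : ℝ) : ℂ))⁻¹ • (2 : ℂ) • 1, fun _ => 1,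
      fun _ => ?_, fun _ => Matrix.PosSemidef.one, ?_⟩
    · refine (Matrix.PosSemidef.one.smul (by norm_num)).smul ?_
      rw [← Complex.ofReal_inv]
      exact Complex.zero_le_real.2 (inv_nonneg.2 (by linarith))
    · simp [Matrix.smul_kronecker]

/-- τ_gen({σ_{a|ω_x}}) ≤ ε_gen(ρ^{AB}). -/
theorem tauGen_le_epsGen {A B ι X : Type*}
    [Fintype A] [Fintype B] [Fintype ι] [DecidableEq A] [DecidableEq B]
    (d : ℕ) (hd : 1 ≤ d)
    (ρ : Matrix (A × B) (A × B) ℂ) (hρ : IsState ρ)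
    (M : ι → Matrix (Fin d × A) (Fin d × A) ℂ)
    (hM : ∀ a, (M a).PosSemidef) (hMsum : (∑ a, M a) = 1)
    (ω : X → Matrix (Fin d) (Fin d) ℂ) (hω : ∀ x, IsState (ω x)) :
    tauGen ω (fun a x => teleA (M a) ρ (ω x)) ≤ epsGen ρ := by
  refine le_csInf (eps_nonempty ρ hρ) ?_
  rintro r ⟨hr, ρs, hρs, hsep⟩
  refine csInf_le ⟨0, fun _ h => h.1⟩ ⟨hr, Fintype.card A, ?_⟩
  let e : Fin (Fintype.card A) ≃ A := (Fintype.equivFin A).symm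
  have hNsum : ∑ a, (M a).submatrix (Prod.map (id : Fin d → Fin d) e) (Prod.map id e) = 1 := by
    have : ∑ a, (M a).submatrix (Prod.map (id : Fin d → Fin d) e) (Prod.map id e) =
        (∑ a, M a).submatrix (Prod.map id e) (Prod.map id e) := by
      ext p q
      simp [Matrix.sum_apply]
    rw [this, hMsum]
    exact Matrix.submatrix_one _ (Function.Injective.prodMap Function.injective_id e.injective)
  refine ⟨ρs.submatrix (Prod.map e id) (Prod.map e id),
    fun a => (M a).submatrix (Prod.map id e) (Prod.map id e),
    fun a => eff (M a) ((((1 + r : ℝ) : ℂ))⁻¹ • (ρ + ((r : ℝ) : ℂ) • ρs)),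
    ⟨hρs.1.submatrix _, ?_⟩, fun a => (hM a).submatrix _, hNsum,
    fun a => eff_separable (hM a) hsep, ?_, ?_⟩
  · rw [← hρs.2]
    exact Fintype.sum_equiv (e.prodCongr (Equiv.refl B)) _ _ fun p => rfl
  · intro a x
    rw [ptrace_eff, teleA_reindex, teleA_lin]
  · intro x
    simp only [teleA_reindex]
    rw [sum_eff M hMsum, sum_teleA M hMsum ρ _ (hω x).2, sum_teleA M hMsum ρs _ (hω x).2,
      ptrace_lin]

end Tele
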